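/- Let Q_6(x_1,…,x_5) = (x_1 + x_2/2 + x_3/2)·x_2 − x_3²/2 − x_4² − x_5². There are no integers x_1, …, x_5 with 0 < Q_6(x_1, x_2, x_3, x_4 + 1/2, x_5 + 1/2) < 1. (This shows that equality is required in Theorem 3 for the critical form Q_6 at c = (0,0,0,1/2,1/2).) -/

import Mathlib

/-!
On the shifted lattice the double of `Q₆` is an integer `n`, and since `(m + 1/2)² ∈ 1/4 + 2ℤ` it
satisfies `n ≡ 2x₁x₂ + x₂² + x₂x₃ - x₃² - 1 (mod 4)`. The form `y² + yz - z²` is anisotropic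
modulo `2`, so `2xy + y² + yz - z²` is even only when `y` and `z` are, and then it is divisible by
`4`. Hence `n ≢ 1 (mod 4)`, whereas a value of `Q₆` in `(2k, 2k + 1)` would force `n = 4k + 1`.
-/

section Parity

variable {x y z : ℤ}

theorem even_sq_add_mul_sub_sq_iff : Even (y ^ 2 + y * z - z ^ 2) ↔ Even y ∧ Even z := by
  simp only [parity_simps]
  tauto

theorem four_dvd_two_mul_mul_add_of_even
    (h : Even (2 * x * y + (y ^ 2 + y * z - z ^ 2))) :
    4 ∣ 2 * x * y + (y ^ 2 + y * z - z ^ 2) := by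
  have binary_even : Even (y ^ 2 + y * z - z ^ 2) :=
    (Int.even_add.mp h).mp ((even_two_mul x).mul_right y)
  obtain ⟨⟨s, rfl⟩, ⟨t, rfl⟩⟩ := even_sq_add_mul_sub_sq_iff.mp binary_even
  exact ⟨x * s + s ^ 2 + s * t - t ^ 2, by ring⟩

end Parity

section CriticalForm

variable {K : Type*} [Field K]

/-- The critical quinary form `Q₆`, as a function of its five coordinates in a field, so that it
can be evaluated at the shifts by `1/2` of integer points. -/
def criticalForm (x₁ x₂ x₃ x₄ x₅ : K) : K :=
  (x₁ + x₂ / 2 + x₃ / 2) * x₂ - x₃ ^ 2 / 2 - x₄ ^ 2 - x₅ ^ 2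

theorem exists_intCast_add_half_sq_eq [NeZero (2 : K)] (m : ℤ) :
    ∃ r : ℤ, ((m : K) + 1 / 2) ^ 2 = 2 * r + 1 / 4 := by
  obtain ⟨r, hr⟩ := (Int.even_mul_succ_self m).two_dvd
  have hr' : (m : K) * (m + 1) = 2 * r := mod_cast congrArg (Int.cast : ℤ → K) hr
  refine ⟨r, ?_⟩
  calc ((m : K) + 1 / 2) ^ 2 = m * (m + 1) + 1 / 4 := by
        rw [show (4 : K) = 2 * 2 by norm_num]; field_simp; ring
    _ = 2 * r + 1 / 4 := by rw [hr']

theorem exists_two_mul_criticalForm_eq_intCast_not_modEq_one [NeZero (2 : K)]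
    (x₁ x₂ x₃ x₄ x₅ : ℤ) :
    ∃ n : ℤ, 2 * criticalForm (x₁ : K) x₂ x₃ (x₄ + 1 / 2) (x₅ + 1 / 2) = n ∧
      ¬ n ≡ 1 [ZMOD 4] := by
  obtain ⟨r, hr⟩ := exists_intCast_add_half_sq_eq (K := K) x₄
  obtain ⟨s, hs⟩ := exists_intCast_add_half_sq_eq (K := K) x₅
  refine ⟨2 * x₁ * x₂ + (x₂ ^ 2 + x₂ * x₃ - x₃ ^ 2) - 4 * (r + s) - 1, ?_, fun h ↦ ?_⟩
  · rw [criticalForm, hr, hs, show (4 : K) = 2 * 2 by norm_num]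
    push_cast
    field_simp
    ring
  · have ternary_mod_four :
        (2 * x₁ * x₂ + (x₂ ^ 2 + x₂ * x₃ - x₃ ^ 2)) % 4 = 2 := by
      rw [Int.ModEq] at h
      omega
    have ternary_even : Even (2 * x₁ * x₂ + (x₂ ^ 2 + x₂ * x₃ - x₃ ^ 2)) :=
      Int.even_iff.mpr (by omega)
    have := four_dvd_two_mul_mul_add_of_even ternary_even
    omega

theorem critical_form_Q6_general [LinearOrder K] [IsStrictOrderedRing K]
    (k x₁ x₂ x₃ x₄ x₅ : ℤ) :
    criticalForm (x₁ : K) x₂ x₃ (x₄ + 1 / 2) (x₅ + 1 / 2) ∉ Set.Ioo (2 * k : K) (2 * k + 1) := by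
  rintro ⟨lower, upper⟩
  obtain ⟨n, hn, n_not_one⟩ :=
    exists_two_mul_criticalForm_eq_intCast_not_modEq_one (K := K) x₁ x₂ x₃ x₄ x₅
  have lower' : 4 * k < n := by
    have : (4 * k : K) < n := by linarith
    exact_mod_cast this
  have upper' : n < 4 * k + 2 := by
    have : (n : K) < 4 * k + 2 := by linarith
    exact_mod_cast this
  exact n_not_one (by rw [Int.ModEq]; omega)

end CriticalForm

/-- For the critical form `Q₆(x) = (x₁ + x₂/2 + x₃/2)x₂ − x₃²/2 − x₄² − x₅²`,
there are no integers `x₁,…,x₅` with `0 < Q₆(x₁, x₂, x₃, x₄+1/2, x₅+1/2) < 1`. -/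
theorem critical_form_Q6 :
    ¬ ∃ x₁ x₂ x₃ x₄ x₅ : ℤ,
      0 < ((x₁ : ℝ) + (x₂ : ℝ)/2 + (x₃ : ℝ)/2) * (x₂ : ℝ)
            - (x₃ : ℝ)^2/2 - ((x₄ : ℝ) + 1/2)^2 - ((x₅ : ℝ) + 1/2)^2 ∧
      ((x₁ : ℝ) + (x₂ : ℝ)/2 + (x₃ : ℝ)/2) * (x₂ : ℝ)
            - (x₃ : ℝ)^2/2 - ((x₄ : ℝ) + 1/2)^2 - ((x₅ : ℝ) + 1/2)^2 < 1 := by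
  rintro ⟨x₁, x₂, x₃, x₄, x₅, h⟩
  exact critical_form_Q6_general (K := ℝ) 0 x₁ x₂ x₃ x₄ x₅ (by simpa [criticalForm] using h)
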